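/- Convergence in norm implies convergence in kNN topology: let y : Fin N → ℝ^d be a configuration such that for each index i the distances from y_i to the other points are pairwise distinct (for j ≠ k, dist(y_i, y_j) ≠ dist(y_i, y_k)), and let y^{(t)} : ℕ → Fin N → ℝ^d be a sequence of configurations with y^{(t)}_i → y_i in norm for every i. Then there exists t* such that F(y^{(t)}) = F(y) for all t ≥ t*, i.e., all nearest-neighbor orderings of the approximating configurations eventually coincide exactly with those of the limit configuration. -/

import Mathlib

/-!
The rank matrix depends only on the truth values of the finitely many comparisons
`dist (y i) (y l) < dist (y i) (y j)`. Distances converge along the sequence, and in the limit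
configuration each comparison with `l ≠ j` is between distinct numbers, so its truth value is
eventually constant and equal to the limiting one.
-/

open Filter

/-- The kNN ordering function: `F(y)_{ij}` is the number of points strictly closer to
`y i` than `y j` is, i.e. the nearest-neighbor rank of `j` relative to `i`. -/
noncomputable def knnOrder {N : ℕ} {E : Type*} [MetricSpace E]
    (y : Fin N → E) (i j : Fin N) : ℕ :=
  {l : Fin N | dist (y i) (y l) < dist (y i) (y j)}.ncard

/-- Convergence in norm implies convergence in kNN topology: if each point of the limit
configuration `y` has pairwise-distinct distances to the other points and
`y⁽ᵗ⁾ᵢ → yᵢ` in norm for every `i`, then there exists `t*` with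
`F(y⁽ᵗ⁾) = F(y)` for all `t ≥ t*`. -/
theorem norm_convergence_implies_knn_convergence {N d : ℕ}
    (y : Fin N → EuclideanSpace ℝ (Fin d))
    (hdist : ∀ i j k : Fin N, j ≠ k → dist (y i) (y j) ≠ dist (y i) (y k))
    (yt : ℕ → Fin N → EuclideanSpace ℝ (Fin d))
    (hconv : ∀ i, Tendsto (fun t => ‖yt t i - y i‖) atTop (nhds 0)) :
    ∃ tstar : ℕ, ∀ t ≥ tstar, knnOrder (yt t) = knnOrder y := by
  have hlim : ∀ i, Tendsto (fun t => yt t i) atTop (nhds (y i)) := fun i =>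
    tendsto_iff_norm_sub_tendsto_zero.2 (hconv i)
  have hd : ∀ i j, Tendsto (fun t => dist (yt t i) (yt t j)) atTop (nhds (dist (y i) (y j))) :=
    fun i j => (hlim i).dist (hlim j)
  -- Distinct limit distances are strictly ordered, and a strict order of limits is eventually
  -- inherited by the sequences; for `l = j` both comparisons are irreflexive.
  have hcmp : ∀ i j l, ∀ᶠ t in atTop,
      (dist (yt t i) (yt t l) < dist (yt t i) (yt t j) ↔
        dist (y i) (y l) < dist (y i) (y j)) := by
    intro i j l
    by_cases hlj : l = j
    · subst hlj
      simp
    · rcases lt_or_gt_of_ne (hdist i l j hlj) with h | h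
      · filter_upwards [(hd i l).eventually_lt (hd i j) h] with t ht
        exact iff_of_true ht h
      · filter_upwards [(hd i j).eventually_lt (hd i l) h] with t ht
        exact iff_of_false ht.not_gt h.not_gt
  have hall : ∀ᶠ t in atTop, ∀ i j l,
      (dist (yt t i) (yt t l) < dist (yt t i) (yt t j) ↔
        dist (y i) (y l) < dist (y i) (y j)) := by
    simpa only [eventually_all] using hcmp
  obtain ⟨tstar, h⟩ := eventually_atTop.1 hall
  refine ⟨tstar, fun t ht => ?_⟩
  funext i j
  simp only [knnOrder, h t ht]
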